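/- Thinned gap probability identity for the GUE: let N ≥ 1, let ξ be real, and let s be real. Set Z_N = ∫_{ℝ^N} Π_{l=1}^{N} e^{-x_l²} Π_{1≤i<j≤N} (x_j - x_i)² dx (which is strictly positive). Then (1/Z_N) ∫_{ℝ^N} Π_{l=1}^{N} (1 - ξ·χ_{x_l > s}) e^{-x_l²} Π_{1≤i<j≤N} (x_j - x_i)² dx_1⋯dx_N = Σ_{k=0}^{N} ((-ξ)^k / k!) ∫_{(s,∞)^k} det[ K_N^G(x_i, x_j) ]_{i,j=1,…,k} dx_1⋯dx_k, where the k=0 term of the sum equals 1 and χ_{x>s} equals 1 if x > s and 0 otherwise. -/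

import Mathlib

/-!
Let `φ_n(x) = e^{-x²/2} H_n(x) / √(√π 2^n n!)` be the orthonormal Hermite functions and let
`A i j = ∫_{(s,∞)} φ_i φ_j`, an `N × N` matrix. Both sides of the identity equal `det (1 - ξ A)`.

The engine is `integral_det_kernel`, an Andréief (Cauchy–Binet) formula: if
`G i j = ∫ a_i b_j dμ`, then
`∫ det [Σ_n a_n(x_i) b_n(x_j)]_{k × k} dμ^k = k! · (sum of the k × k principal minors of G)`,
and this sum of minors is the `k`-th coefficient of `det (1 + X G)`. It follows by expanding the
determinant multilinearly in its rows and integrating row by row (`integral_det`).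

* Right-hand side: the kernel is `Σ_n φ_n(x) φ_n(y)`, so with `μ` Lebesgue measure on `(s,∞)` the
  sum over `k` is the expansion of the polynomial `det (1 + X A)` at `X = -ξ`.
* Left-hand side: by the Vandermonde determinant, `∏ e^{-x_l²} ∏ (x_j - x_i)²` is a positive
  constant times `det [φ_j(x_i)]²` (`weight_mul_vdm2`). With the weight `w = 1 - ξ χ_{(s,∞)}` this
  is the case `k = N`, `a_n = w φ_n`, `b_n = φ_n`, where the only principal minor is
  `det [∫ w φ_i φ_j] = det (1 - ξ A)` by orthonormality. The case `ξ = 0` evaluates `Z_N` up to the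
  same constant and shows that it is positive.
-/

open Nat MeasureTheory

/-- The physicists' Hermite polynomials: `H 0 x = 1`, `H 1 x = 2x`,
`H (n+1) x = 2x * H n x - 2n * H (n-1) x`. -/
noncomputable def hermiteP : ℕ → ℝ → ℝ
  | 0, _ => 1
  | 1, x => 2 * x
  | (n + 2), x => 2 * x * hermiteP (n + 1) x - 2 * (n + 1) * hermiteP n x

/-- The GUE correlation kernel `K_N^G(x,y) = e^{-(x²+y²)/2} Σ_{n<N} H_n(x)H_n(y)/(√π 2^n n!)`. -/
noncomputable def gueKernel (N : ℕ) (x y : ℝ) : ℝ :=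
  Real.exp (-(x ^ 2 + y ^ 2) / 2) *
    ∑ n ∈ Finset.range N, hermiteP n x * hermiteP n y / (Real.sqrt Real.pi * 2 ^ n * n !)

/-- The Vandermonde-squared factor `Π_{i<j} (x_j - x_i)²`. -/
noncomputable def vdm2 (n : ℕ) (x : Fin n → ℝ) : ℝ :=
  ∏ p ∈ Finset.univ.filter (fun p : Fin n × Fin n => p.1 < p.2), (x p.2 - x p.1) ^ 2

/-- The GUE normalisation `Z_N = ∫_{ℝ^N} Π_l e^{-x_l²} Π_{i<j}(x_j-x_i)² dx`. -/
noncomputable def gueZ (n : ℕ) : ℝ :=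
  ∫ x : Fin n → ℝ, (∏ l, Real.exp (-(x l) ^ 2)) * vdm2 n x

/-! ### Integrals of determinants and principal minors -/

/-- The determinant may be integrated row by row when row `i` depends on the variable `x i` only. -/
lemma integral_det {k : ℕ} (μ : Measure ℝ) [SigmaFinite μ] (F : Fin k → Fin k → ℝ → ℝ)
    (hF : ∀ i j, Integrable (F i j) μ) :
    Integrable (fun x : Fin k → ℝ => Matrix.det (Matrix.of fun i j => F i j (x i)))
      (Measure.pi fun _ => μ) ∧
    ∫ x : Fin k → ℝ, Matrix.det (Matrix.of fun i j => F i j (x i)) ∂(Measure.pi fun _ => μ)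
      = Matrix.det (Matrix.of fun i j => ∫ t, F i j t ∂μ) := by
  have hint : ∀ σ : Equiv.Perm (Fin k), Integrable
      (fun x : Fin k → ℝ => ((Equiv.Perm.sign σ : ℤ) : ℝ) * ∏ i, F i (σ i) (x i))
      (Measure.pi fun _ => μ) := fun σ =>
    (Integrable.fintype_prod (f := fun i => F i (σ i)) fun i => hF i (σ i)).const_mul _
  have hexp : (fun x : Fin k → ℝ => Matrix.det (Matrix.of fun i j => F i j (x i))) =
      fun x => ∑ σ : Equiv.Perm (Fin k),
        ((Equiv.Perm.sign σ : ℤ) : ℝ) * ∏ i, F i (σ i) (x i) := by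
    funext x
    rw [← Matrix.det_transpose, Matrix.det_apply']
    rfl
  rw [hexp]
  refine ⟨integrable_finsetSum _ fun σ _ => hint σ, ?_⟩
  rw [integral_finsetSum _ fun σ _ => hint σ, ← Matrix.det_transpose, Matrix.det_apply']
  refine Finset.sum_congr rfl fun σ _ => ?_
  rw [integral_const_mul]
  congr 1
  exact integral_fintype_prod_eq_prod (fun i => F i (σ i))

/-- Summing `det (M (f i) (f j))` over all maps `f : Fin k → n` counts every `k × k` principal minor
of `M` exactly `k!` times: non-injective maps contribute zero, and the injective ones are grouped by
their image. -/
lemma sum_det_submatrix {n : Type*} [Fintype n] [DecidableEq n] (M : Matrix n n ℝ) (k : ℕ) :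
    ∑ f : Fin k → n, (M.submatrix f f).det =
      (k ! : ℝ) * ∑ S ∈ Finset.univ.powersetCard k,
        (M.submatrix (Subtype.val : S → n) (Subtype.val : S → n)).det := by
  have h0 : ∑ f : Fin k → n, (M.submatrix f f).det =
      ∑ f ∈ Finset.univ.filter (fun f : Fin k → n => Function.Injective f),
        (M.submatrix f f).det := by
    rw [Finset.sum_filter]
    refine Finset.sum_congr rfl fun f _ => ?_
    split_ifs with h
    · rfl
    · simp only [Function.Injective, not_forall] at h
      obtain ⟨i, j, hij, hne⟩ := h
      refine Matrix.det_zero_of_row_eq hne ?_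
      funext l
      simp [hij]
  have hmaps : ∀ f ∈ Finset.univ.filter (fun f : Fin k → n => Function.Injective f),
      Finset.image f Finset.univ ∈ Finset.univ.powersetCard k := by
    intro f hf
    rw [Finset.mem_powersetCard]
    refine ⟨Finset.subset_univ _, ?_⟩
    rw [Finset.card_image_of_injective _ (Finset.mem_filter.1 hf).2]
    simp
  rw [h0, ← Finset.sum_fiberwise_of_maps_to hmaps, Finset.mul_sum]
  refine Finset.sum_congr rfl fun S hS => ?_
  have hcard : Fintype.card S = k := by simpa using (Finset.mem_powersetCard.1 hS).2
  -- The injective maps with image `S` are the bijections `Fin k ≃ S`.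
  have hsum : ∑ f ∈ (Finset.univ.filter (fun f : Fin k → n => Function.Injective f)).filter
        (fun f => Finset.image f Finset.univ = S), (M.submatrix f f).det =
      ∑ _e : Fin k ≃ S, (M.submatrix (Subtype.val : S → n) (Subtype.val : S → n)).det := by
    symm
    refine Finset.sum_bij (fun (e : Fin k ≃ S) _ => fun i => (e i : n)) ?_ ?_ ?_ ?_
    · intro e _
      simp only [Finset.mem_filter, Finset.mem_univ, true_and]
      refine ⟨Subtype.val_injective.comp e.injective, ?_⟩
      ext a
      simp only [Finset.mem_image, Finset.mem_univ, true_and]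
      constructor
      · rintro ⟨i, rfl⟩
        exact (e i).2
      · intro ha
        exact ⟨e.symm ⟨a, ha⟩, by simp⟩
    · intro e _ e' _ h
      ext i
      exact congrFun h i
    · intro f hf
      simp only [Finset.mem_filter, Finset.mem_univ, true_and] at hf
      obtain ⟨hinj, him⟩ := hf
      have hmem : ∀ i, f i ∈ S := fun i => him ▸ Finset.mem_image_of_mem f (Finset.mem_univ i)
      have hbij : Function.Bijective (fun i => (⟨f i, hmem i⟩ : S)) := by
        rw [Fintype.bijective_iff_injective_and_card]
        refine ⟨fun i j h => hinj (congrArg Subtype.val h), by simp [hcard]⟩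
      exact ⟨Equiv.ofBijective _ hbij, Finset.mem_univ _, rfl⟩
    · intro e _
      exact (Matrix.det_submatrix_equiv_self e
        (M.submatrix (Subtype.val : S → n) (Subtype.val : S → n))).symm
  rw [hsum, Finset.sum_const, Finset.card_univ,
    Fintype.card_equiv (Fintype.equivOfCardEq (by simp [hcard])), Fintype.card_fin, nsmul_eq_mul]

/-- Andréief's formula: the integral of `det (Σ_n a_n(x_i) b_n(x_j))` over `k` variables is `k!`
times the sum of the `k × k` principal minors of the matrix `(∫ a_i b_j)`. -/
lemma integral_det_kernel {N : ℕ} (μ : Measure ℝ) [SigmaFinite μ] (a b : Fin N → ℝ → ℝ)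
    (hab : ∀ i j, Integrable (fun t => a i t * b j t) μ) (k : ℕ) :
    ∫ x : Fin k → ℝ, Matrix.det (Matrix.of fun i j => ∑ n, a n (x i) * b n (x j))
        ∂(Measure.pi fun _ => μ)
      = (k ! : ℝ) * ∑ S ∈ Finset.univ.powersetCard k,
        ((Matrix.of fun i j => ∫ t, a i t * b j t ∂μ).submatrix
          (Subtype.val : S → Fin N) (Subtype.val : S → Fin N)).det := by
  -- Row `i` is `Σ_n a_n(x_i) • (b_n(x_j))_j`; expand multilinearly, then transpose the remaining
  -- determinant so that each of its rows depends on a single variable.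
  have hexp : ∀ x : Fin k → ℝ,
      Matrix.det (Matrix.of fun i j => ∑ n, a n (x i) * b n (x j)) =
      ∑ f : Fin k → Fin N, Matrix.det (Matrix.of fun i j => a (f i) (x i) * b (f j) (x i)) := by
    intro x
    have h1 : (Matrix.of fun i j => ∑ n, a n (x i) * b n (x j) : Matrix (Fin k) (Fin k) ℝ) =
        fun i => ∑ n, a n (x i) • (fun j => b n (x j)) := by
      ext i j
      simp [Finset.sum_apply]
    have h2 := (Matrix.detRowAlternating (R := ℝ) (n := Fin k)).toMultilinearMap.map_sum
      (fun i (n : Fin N) => a n (x i) • (fun j => b n (x j)))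
    rw [h1]
    refine h2.trans (Finset.sum_congr rfl fun f _ => ?_)
    have h3 := Matrix.det_mul_column (fun i => a (f i) (x i))
      (Matrix.of fun i j => b (f i) (x j))
    have h4 := Matrix.det_mul_column (fun i => a (f i) (x i))
      (Matrix.of fun i j => b (f j) (x i))
    have h5 : (Matrix.of fun i j => b (f i) (x j) : Matrix (Fin k) (Fin k) ℝ).det =
        (Matrix.of fun i j => b (f j) (x i)).det := by
      rw [← Matrix.det_transpose]; rfl
    rw [h5, ← h4] at h3
    exact h3
  simp_rw [hexp]
  have hrow := fun f : Fin k → Fin N => integral_det μ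
    (fun i j t => a (f i) t * b (f j) t) fun i j => hab (f i) (f j)
  rw [integral_finsetSum _ fun f _ => (hrow f).1, ← sum_det_submatrix]
  exact Finset.sum_congr rfl fun f _ => (hrow f).2

/-- The sums of principal minors are the coefficients of `t ↦ det (1 + t M)`. -/
lemma sum_minors_eq_det {N : ℕ} (M : Matrix (Fin N) (Fin N) ℝ) (t : ℝ) :
    ∑ k ∈ Finset.range (N + 1), t ^ k * ∑ S ∈ Finset.univ.powersetCard k,
        (M.submatrix (Subtype.val : S → Fin N) (Subtype.val : S → Fin N)).det
      = (1 + t • M).det := by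
  set P : Polynomial ℝ := (1 + (Polynomial.X : Polynomial ℝ) • M.map Polynomial.C).det with hP
  have hdeg : P.natDegree < N + 1 := by
    rw [Nat.lt_succ_iff, Polynomial.natDegree_le_iff_coeff_eq_zero]
    intro k hk
    rw [hP, Matrix.coeff_det_one_add_X_smul_eq_sum_minors,
      Finset.powersetCard_eq_empty.2 (by simpa using hk), Finset.sum_empty]
  have heval : P.eval t = (1 + t • M).det := by
    rw [hP, ← Polynomial.coe_evalRingHom, RingHom.map_det]
    congr 1
    ext i j
    by_cases h : i = j <;> simp [h, mul_comm t]
  rw [← heval, Polynomial.eval_eq_sum_range' hdeg]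
  refine Finset.sum_congr rfl fun k _ => ?_
  rw [hP, Matrix.coeff_det_one_add_X_smul_eq_sum_minors, mul_comm]

/-! ### Monic Hermite polynomials and their orthogonality -/

/-- The monic rescaling `2^{-n} H_n` of the Hermite polynomials, as polynomials. They are
generated by `p ↦ X p - p' / 2`, which is `-1/2` times the derivative conjugated by `e^{-x²}`. -/
noncomputable def monicHermite : ℕ → Polynomial ℝ
  | 0 => 1
  | n + 1 => Polynomial.X * monicHermite n -
      Polynomial.C (1 / 2) * Polynomial.derivative (monicHermite n)

lemma monicHermite_succ (n : ℕ) : monicHermite (n + 1) = Polynomial.X * monicHermite n -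
    Polynomial.C (1 / 2) * Polynomial.derivative (monicHermite n) := rfl

lemma monicHermite_monic_natDegree (n : ℕ) :
    (monicHermite n).Monic ∧ (monicHermite n).natDegree = n := by
  induction n with
  | zero => simp [monicHermite]
  | succ n ih =>
    have hX : (Polynomial.X * monicHermite n).Monic := Polynomial.monic_X.mul ih.1
    have hXdeg : (Polynomial.X * monicHermite n).natDegree = n + 1 := by
      rw [Polynomial.monic_X.natDegree_mul ih.1, ih.2, Polynomial.natDegree_X, add_comm]
    have hlt : (Polynomial.C (1 / 2) * Polynomial.derivative (monicHermite n)).degree <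
        (Polynomial.X * monicHermite n).degree := by
      apply Polynomial.degree_lt_degree
      rw [hXdeg]
      have h1 := Polynomial.natDegree_C_mul_le (1 / 2 : ℝ)
        (Polynomial.derivative (monicHermite n))
      have h2 := Polynomial.natDegree_derivative_le (monicHermite n)
      omega
    refine ⟨hX.sub_of_left hlt, ?_⟩
    rw [monicHermite, Polynomial.natDegree_eq_of_degree_eq
      (Polynomial.degree_sub_eq_left_of_degree_lt hlt), hXdeg]

lemma derivative_monicHermite_succ (n : ℕ) :
    Polynomial.derivative (monicHermite (n + 1)) =
      Polynomial.C ((n : ℝ) + 1) * monicHermite n := by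
  induction n with
  | zero => simp [monicHermite]
  | succ n ih =>
    rw [monicHermite, Polynomial.derivative_sub, Polynomial.derivative_mul,
      Polynomial.derivative_C_mul, ih, Polynomial.derivative_C_mul, Polynomial.derivative_X]
    conv_rhs => rw [Nat.cast_succ, Polynomial.C_add, add_mul]
    rw [monicHermite_succ n, Polynomial.C_1]
    ring

lemma hermiteP_eq (n : ℕ) (x : ℝ) : hermiteP n x = 2 ^ n * (monicHermite n).eval x := by
  induction n using Nat.twoStepInduction with
  | zero => simp [hermiteP, monicHermite]
  | one => simp [hermiteP, monicHermite]
  | more n ih0 ih1 =>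
    rw [hermiteP, ih0, ih1, monicHermite_succ (n + 1), derivative_monicHermite_succ]
    simp only [Polynomial.eval_sub, Polynomial.eval_mul, Polynomial.eval_X, Polynomial.eval_C]
    ring

lemma integrable_poly_gauss (p : Polynomial ℝ) :
    Integrable (fun x : ℝ => p.eval x * Real.exp (-x ^ 2)) := by
  induction p using Polynomial.induction_on' with
  | add p q hp hq =>
    simp only [Polynomial.eval_add, add_mul]
    exact hp.add hq
  | monomial n c =>
    have h := (integrable_rpow_mul_exp_neg_mul_sq (b := 1) one_pos (s := n)
      (by have : (0 : ℝ) ≤ n := n.cast_nonneg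
          linarith)).const_mul c
    simpa [mul_assoc] using h

/-- Integration by parts against the Gaussian: `x p - p'/2` is adjoint to half the derivative. -/
lemma integral_gauss_by_parts (q : Polynomial ℝ) (n : ℕ) :
    ∫ x : ℝ, (q * monicHermite (n + 1)).eval x * Real.exp (-x ^ 2) =
      (1 / 2) * ∫ x : ℝ, (Polynomial.derivative q * monicHermite n).eval x
        * Real.exp (-x ^ 2) := by
  have hd : ∀ x : ℝ, HasDerivAt (fun x => (q * monicHermite n).eval x * Real.exp (-x ^ 2))
      ((Polynomial.derivative q * monicHermite n).eval x * Real.exp (-x ^ 2)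
        - 2 * ((q * monicHermite (n + 1)).eval x * Real.exp (-x ^ 2))) x := by
    intro x
    have h1 := (q * monicHermite n).hasDerivAt x
    have h2 : HasDerivAt (fun x : ℝ => Real.exp (-x ^ 2))
        (Real.exp (-x ^ 2) * (-(2 * x))) x := by
      simpa using ((hasDerivAt_pow 2 x).neg).exp
    refine (h1.mul h2).congr_deriv ?_
    rw [monicHermite_succ]
    simp only [Polynomial.derivative_mul, Polynomial.eval_sub, Polynomial.eval_add,
      Polynomial.eval_mul, Polynomial.eval_X, Polynomial.eval_C]
    ring
  have i1 := integrable_poly_gauss (Polynomial.derivative q * monicHermite n)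
  have i2 := (integrable_poly_gauss (q * monicHermite (n + 1))).const_mul 2
  have h := integral_eq_zero_of_hasDerivAt_of_integrable hd (i1.sub i2)
    (integrable_poly_gauss _)
  rw [integral_sub i1 i2, integral_const_mul] at h
  linarith

lemma monicHermite_orthogonal (m n : ℕ) :
    ∫ x : ℝ, (monicHermite m * monicHermite n).eval x * Real.exp (-x ^ 2) =
      if m = n then √Real.pi * n ! / 2 ^ n else 0 := by
  induction n generalizing m with
  | zero =>
    cases m with
    | zero => simpa [monicHermite] using integral_gaussian 1
    | succ m =>
      rw [mul_comm (monicHermite (m + 1)), integral_gauss_by_parts]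
      simp [monicHermite]
  | succ n ih =>
    rw [integral_gauss_by_parts]
    cases m with
    | zero => simp [monicHermite]
    | succ m =>
      rw [derivative_monicHermite_succ]
      simp only [Polynomial.eval_mul, Polynomial.eval_C] at ih ⊢
      simp_rw [mul_assoc] at ih ⊢
      rw [integral_const_mul, ih]
      by_cases h : m = n
      · subst h
        simp only [if_true, Nat.factorial_succ]
        push_cast
        field_simp
        ring
      · simp [h]

/-! ### Orthonormal Hermite functions -/

/-- The squared norm `√π 2^n n!` of `H_n` in `L²(e^{-x²} dx)`. -/
noncomputable def hermiteNormSq (n : ℕ) : ℝ := √Real.pi * 2 ^ n * n !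

lemma hermiteNormSq_pos (n : ℕ) : 0 < hermiteNormSq n := by
  unfold hermiteNormSq
  have := Real.pi_pos
  positivity

/-- The orthonormal Hermite functions `e^{-x²/2} H_n(x) / √(√π 2^n n!)`. -/
noncomputable def hermiteFn (n : ℕ) (x : ℝ) : ℝ :=
  Real.exp (-x ^ 2 / 2) * (2 ^ n / √(hermiteNormSq n) * (monicHermite n).eval x)

lemma hermiteFn_mul (m n : ℕ) (x : ℝ) :
    hermiteFn m x * hermiteFn n x =
      (2 ^ m / √(hermiteNormSq m) * (2 ^ n / √(hermiteNormSq n))) *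
        ((monicHermite m * monicHermite n).eval x * Real.exp (-x ^ 2)) := by
  have h : Real.exp (-x ^ 2) = Real.exp (-x ^ 2 / 2) * Real.exp (-x ^ 2 / 2) := by
    rw [← Real.exp_add]; ring_nf
  rw [h, Polynomial.eval_mul, hermiteFn, hermiteFn]
  ring

lemma integrable_hermiteFn_mul (m n : ℕ) :
    Integrable (fun x => hermiteFn m x * hermiteFn n x) := by
  simp_rw [hermiteFn_mul]
  exact (integrable_poly_gauss _).const_mul _

lemma hermiteFn_orthonormal (m n : ℕ) :
    ∫ x, hermiteFn m x * hermiteFn n x = if m = n then 1 else 0 := by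
  simp_rw [hermiteFn_mul]
  rw [integral_const_mul, monicHermite_orthogonal]
  split_ifs with h
  · subst h
    have hp := hermiteNormSq_pos m
    rw [_root_.div_mul_div_comm, Real.mul_self_sqrt hp.le, hermiteNormSq]
    have := Real.sqrt_pos.2 Real.pi_pos
    field_simp
  · simp

lemma gueKernel_eq (N : ℕ) (x y : ℝ) :
    gueKernel N x y = ∑ n : Fin N, hermiteFn n x * hermiteFn n y := by
  rw [gueKernel, Finset.mul_sum, Finset.sum_range]
  refine Finset.sum_congr rfl fun n _ => ?_
  have h : Real.exp (-(x ^ 2 + y ^ 2) / 2) = Real.exp (-x ^ 2 / 2) * Real.exp (-y ^ 2 / 2) := by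
    rw [← Real.exp_add]; ring_nf
  have hp := hermiteNormSq_pos n
  have hs : (√Real.pi * 2 ^ (n : ℕ) * (n : ℕ)! : ℝ) =
      √(hermiteNormSq n) * √(hermiteNormSq n) := by
    rw [Real.mul_self_sqrt hp.le, hermiteNormSq]
  rw [h, hs, hermiteP_eq, hermiteP_eq, hermiteFn, hermiteFn]
  have := Real.sqrt_pos.2 hp
  field_simp

/-! ### The joint density as a squared determinant -/

lemma vdm2_eq (n : ℕ) (x : Fin n → ℝ) : vdm2 n x = (Matrix.vandermonde x).det ^ 2 := by
  rw [vdm2, Matrix.det_vandermonde, Finset.prod_pow, Finset.prod_filter,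
    ← Finset.univ_product_univ, Finset.prod_product]
  congr 1
  refine Finset.prod_congr rfl fun i _ => ?_
  rw [← Finset.prod_filter]
  refine Finset.prod_congr ?_ fun _ _ => rfl
  ext j
  simp

/-- `det [φ_j(x_i)]` is a Gaussian factor times the Vandermonde determinant, up to the leading
coefficients of the `φ_j`. -/
lemma det_hermiteFn (N : ℕ) (x : Fin N → ℝ) :
    (Matrix.of fun i j : Fin N => hermiteFn j (x i)).det =
      (∏ i, Real.exp (-(x i) ^ 2 / 2)) *
        ((∏ j : Fin N, 2 ^ (j : ℕ) / √(hermiteNormSq j)) * (Matrix.vandermonde x).det) := by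
  rw [Matrix.det_eval_matrixOfPolynomials_eq_det_vandermonde x (fun j => monicHermite j)
    (fun i => (monicHermite_monic_natDegree i).2) (fun i => (monicHermite_monic_natDegree i).1),
    ← Matrix.det_mul_row, ← Matrix.det_mul_column]
  rfl

lemma leadingCoeff_prod_pos (N : ℕ) :
    0 < ∏ j : Fin N, (2 : ℝ) ^ (j : ℕ) / √(hermiteNormSq j) := by
  refine Finset.prod_pos fun j _ => ?_
  have := Real.sqrt_pos.2 (hermiteNormSq_pos j)
  positivity

/-- The weighted joint density is a positive constant times the determinant of a finite-rank
kernel. The constant is the inverse square of the product of the leading coefficients of the `φ_j`. -/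
lemma weight_mul_vdm2 (N : ℕ) (w : ℝ → ℝ) (x : Fin N → ℝ) :
    (∏ l, w (x l) * Real.exp (-(x l) ^ 2)) * vdm2 N x =
      ((∏ j : Fin N, 2 ^ (j : ℕ) / √(hermiteNormSq j)) ^ 2)⁻¹ *
        Matrix.det (Matrix.of fun i j : Fin N =>
          ∑ n : Fin N, (w (x i) * hermiteFn n (x i)) * hermiteFn n (x j)) := by
  have hfac : (Matrix.of fun i j : Fin N =>
        ∑ n : Fin N, (w (x i) * hermiteFn n (x i)) * hermiteFn n (x j)) =
      (Matrix.of fun i j : Fin N => w (x i) * (Matrix.of fun i j : Fin N => hermiteFn j (x i)) i j)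
        * (Matrix.of fun i j : Fin N => hermiteFn j (x i)).transpose := by
    ext i j
    simp [Matrix.mul_apply]
  have hc : (∏ j : Fin N, (2 : ℝ) ^ (j : ℕ) / √(hermiteNormSq j)) ≠ 0 :=
    (leadingCoeff_prod_pos N).ne'
  have hexp : ∏ l, Real.exp (-(x l) ^ 2) = (∏ l, Real.exp (-(x l) ^ 2 / 2)) ^ 2 := by
    rw [← Finset.prod_pow]
    refine Finset.prod_congr rfl fun l _ => ?_
    rw [sq (Real.exp _), ← Real.exp_add]; ring_nf
  rw [hfac, Matrix.det_mul, Matrix.det_mul_column, Matrix.det_transpose, det_hermiteFn, vdm2_eq,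
    Finset.prod_mul_distrib, hexp]
  field_simp

/-- The Gram matrix of the Hermite functions on `(s,∞)`. -/
noncomputable def tailGram (N : ℕ) (s : ℝ) : Matrix (Fin N) (Fin N) ℝ :=
  Matrix.of fun i j => ∫ t in Set.Ioi s, hermiteFn i t * hermiteFn j t

lemma thinned_mul_eq (ξ s : ℝ) (m n : ℕ) :
    (fun t : ℝ => (1 - ξ * (if s < t then 1 else 0)) * hermiteFn m t * hermiteFn n t) =
      fun t => hermiteFn m t * hermiteFn n t -
        ξ * (Set.Ioi s).indicator (fun t => hermiteFn m t * hermiteFn n t) t := by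
  funext t
  by_cases h : s < t
  · simp [h]
    ring
  · simp [h]

/-- The thinned, unnormalised partition function is a determinant, up to a constant that does not
depend on the thinning. -/
lemma integral_thinned (N : ℕ) (ξ s : ℝ) :
    ∫ x : Fin N → ℝ,
        (∏ l, (1 - ξ * (if s < x l then 1 else 0)) * Real.exp (-(x l) ^ 2)) * vdm2 N x =
      ((∏ j : Fin N, 2 ^ (j : ℕ) / √(hermiteNormSq j)) ^ 2)⁻¹ * (N ! *
        (1 + (-ξ) • tailGram N s).det) := by
  have hind : ∀ m n : ℕ, Integrable (fun t => ξ * (Set.Ioi s).indicator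
      (fun t => hermiteFn m t * hermiteFn n t) t) := fun m n =>
    ((integrable_hermiteFn_mul m n).indicator measurableSet_Ioi).const_mul ξ
  have hint : ∀ i j : Fin N, Integrable (fun t : ℝ =>
      (1 - ξ * (if s < t then 1 else 0)) * hermiteFn i t * hermiteFn j t) := by
    intro i j
    rw [thinned_mul_eq]
    exact (integrable_hermiteFn_mul i j).sub (hind i j)
  have hgram : (Matrix.of fun i j : Fin N => ∫ t : ℝ,
      (1 - ξ * (if s < t then 1 else 0)) * hermiteFn i t * hermiteFn j t) =
      1 + (-ξ) • tailGram N s := by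
    ext i j
    rw [Matrix.of_apply, thinned_mul_eq,
      integral_sub (integrable_hermiteFn_mul i j) (hind i j), hermiteFn_orthonormal,
      integral_const_mul, integral_indicator measurableSet_Ioi]
    simp [Matrix.one_apply, tailGram, Fin.ext_iff, sub_eq_add_neg]
  have hA := integral_det_kernel (N := N) volume
    (fun n t => (1 - ξ * (if s < t then 1 else 0)) * hermiteFn n t) (fun n t => hermiteFn n t)
    hint N
  -- In top degree the only principal minor is the full determinant.
  have htop : ∀ M : Matrix (Fin N) (Fin N) ℝ, ∑ S ∈ Finset.univ.powersetCard N,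
      (M.submatrix (Subtype.val : S → Fin N) (Subtype.val : S → Fin N)).det = M.det := by
    intro M
    have hu : (Finset.univ : Finset (Fin N)).powersetCard N = {Finset.univ} := by
      simpa using Finset.powersetCard_self (Finset.univ : Finset (Fin N))
    rw [hu, Finset.sum_singleton]
    exact Matrix.det_submatrix_equiv_self (Equiv.subtypeUnivEquiv Finset.mem_univ) M
  rw [htop, hgram] at hA
  simp_rw [weight_mul_vdm2 N (fun t => 1 - ξ * (if s < t then 1 else 0))]
  rw [integral_const_mul, ← hA]
  rfl

/-- Each term on the correlation side is a sum of principal minors of the tail Gram matrix. -/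
lemma integral_det_gueKernel (N k : ℕ) (s : ℝ) :
    ∫ x in Set.univ.pi (fun _ : Fin k => Set.Ioi s),
        Matrix.det (Matrix.of fun i j : Fin k => gueKernel N (x i) (x j)) =
      (k ! : ℝ) * ∑ S ∈ Finset.univ.powersetCard k,
        ((tailGram N s).submatrix (Subtype.val : S → Fin N) (Subtype.val : S → Fin N)).det := by
  simp_rw [gueKernel_eq]
  rw [volume_pi, Measure.restrict_pi_pi]
  exact integral_det_kernel (volume.restrict (Set.Ioi s)) (fun n : Fin N => hermiteFn n)
    (fun n : Fin N => hermiteFn n)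
    (fun i j => (integrable_hermiteFn_mul i j).integrableOn) k

/-- Thinned gap probability identity for the GUE:
`(1/Z_N) ∫_{ℝ^N} Π_l (1 - ξ χ_{x_l>s}) e^{-x_l²} Π_{i<j}(x_j-x_i)² dx
  = Σ_{k=0}^N ((-ξ)^k/k!) ∫_{(s,∞)^k} det[K_N^G(x_i,x_j)] dx`, and `Z_N > 0`. -/
theorem gue_thinned_gap_probability (N : ℕ) (hN : 1 ≤ N) (ξ s : ℝ) :
    0 < gueZ N ∧
    (1 / gueZ N) *
        (∫ x : Fin N → ℝ,
          (∏ l, (1 - ξ * (if s < x l then 1 else 0)) * Real.exp (-(x l) ^ 2)) * vdm2 N x)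
      = ∑ k ∈ Finset.range (N + 1), (-ξ) ^ k / (k ! : ℝ) *
          ∫ x in Set.univ.pi (fun _ : Fin k => Set.Ioi s),
            Matrix.det (Matrix.of fun i j : Fin k => gueKernel N (x i) (x j)) := by
  have hc : 0 < ((∏ j : Fin N, (2 : ℝ) ^ (j : ℕ) / √(hermiteNormSq j)) ^ 2)⁻¹ :=
    inv_pos.2 (pow_pos (leadingCoeff_prod_pos N) 2)
  -- `Z_N` is the unthinned case `ξ = 0`.
  have hZ : gueZ N = ((∏ j : Fin N, (2 : ℝ) ^ (j : ℕ) / √(hermiteNormSq j)) ^ 2)⁻¹ * N ! := by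
    have h := integral_thinned N 0 s
    simpa [gueZ] using h
  have hpos : 0 < gueZ N := by
    rw [hZ]
    positivity
  refine ⟨hpos, ?_⟩
  rw [integral_thinned, ← mul_assoc _ (N ! : ℝ), ← hZ, ← mul_assoc,
    one_div_mul_cancel hpos.ne', one_mul, ← sum_minors_eq_det]
  refine Finset.sum_congr rfl fun k _ => ?_
  rw [integral_det_gueKernel, ← mul_assoc, div_mul_cancel₀ _ (by positivity)]
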